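/- Walks through an enforced arc survive enforcement (converse direction of Proposition 2.5): every s,t-walk in G that contains the arc (u, v) uses no arc deleted by enforcing (u, v), i.e., it contains no arc (u, w) with w ≠ v and no arc (i, j) with τ(i) < τ(u) < τ(j); hence it is an s,t-walk in the subgraph obtained by enforcing (u, v). -/

import Mathlib

variable {V : Type*} [Fintype V]

/-- An `s,t`-walk in the directed graph with arc set `A` is a finite list of vertices
starting at `s` and ending at `t` whose consecutive pairs are all arcs. -/
def IsWalk (A : Set (V × V)) (s t : V) (p : List V) : Prop :=
  p.head? = some s ∧ p.getLast? = some t ∧ ∀ a ∈ p.zip p.tail, a ∈ A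

/-- The arcs deleted when enforcing the arc `uv = (u, v)`: every arc `(u, w)` with
`w ≠ v`, and every arc `(i, j)` with `τ i < τ u < τ j`. -/
def EnfDeleted (τ : V → ℕ) (uv a : V × V) : Prop :=
  (a.1 = uv.1 ∧ a.2 ≠ uv.2) ∨ (τ a.1 < τ uv.1 ∧ τ uv.1 < τ a.2)

/-- Enforcing an arc `uv ∈ A`: the subgraph of `G` obtained by deleting every arc
`(u, w)` with `w ≠ v` and every arc `(i, j)` with `τ i < τ u < τ j`. -/
def enforce (A : Set (V × V)) (τ : V → ℕ) (uv : V × V) : Set (V × V) :=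
  {a ∈ A | ¬ EnfDeleted τ uv a}

/-!
A topological order increases along every walk, so of two distinct arcs of a walk one ends
before (or where) the other starts. An arc `a` deleted by enforcing `(u, v)` admits neither
order: it starts no later than `u`, hence before `v`, and it ends after `u`. So the only arc of
a walk through `(u, v)` that could have been deleted is `(u, v)` itself, which enforcing keeps.
-/

section ConsecutivePairs

variable {α : Type*} {r : α → α → Prop} {l : List α}

theorem isChain_iff_forall_mem_zip_tail :
    l.IsChain r ↔ ∀ a ∈ l.zip l.tail, r a.1 a.2 := by
  induction l with
  | nil => simp
  | cons x l ih => cases l <;> simp_all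

theorem pairwise_zip_tail [Std.Refl r] (hl : l.Pairwise r) :
    (l.zip l.tail).Pairwise fun a b => r a.2 b.1 := by
  induction l with
  | nil => exact .nil
  | cons x l ih =>
    cases l with
    | nil => exact .nil
    | cons y l =>
      have hyl : (y :: l).Pairwise r := hl.of_cons
      have hy : ∀ z ∈ y :: l, r y z :=
        List.forall_mem_cons.2 ⟨refl y, fun _ => List.rel_of_pairwise_cons hyl⟩
      exact .cons (fun _ hb => hy _ (List.of_mem_zip hb).1) (ih hyl)

theorem eq_or_rel_or_rel_of_mem_zip_tail [Std.Refl r] (hl : l.Pairwise r) {a b : α × α}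
    (ha : a ∈ l.zip l.tail) (hb : b ∈ l.zip l.tail) :
    a = b ∨ r a.2 b.1 ∨ r b.2 a.1 :=
  have hpair := pairwise_zip_tail hl
  List.Pairwise.forall_of_forall_of_flip (R := fun a b => a = b ∨ r a.2 b.1 ∨ r b.2 a.1)
    (fun _ _ => .inl rfl) (hpair.imp fun h => .inr (.inl h))
    (hpair.imp fun h => .inr (.inr h)) ha hb

end ConsecutivePairs

namespace IsWalk

variable {α : Type*} {A : Set (α × α)} {s t : α} {p : List α}

theorem pairwise_le {β : Type*} [Preorder β] {τ : α → β} (hp : IsWalk A s t p)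
    (hτ : ∀ a ∈ A, τ a.1 ≤ τ a.2) : p.Pairwise (Order.Preimage τ (· ≤ ·)) :=
  (isChain_iff_forall_mem_zip_tail.2 fun a ha => hτ a (hp.2.2 a ha)).pairwise

theorem not_enfDeleted {τ : α → ℕ} (hp : IsWalk A s t p) (hτ : ∀ a ∈ A, τ a.1 < τ a.2)
    {e a : α × α} (he : e ∈ p.zip p.tail) (ha : a ∈ p.zip p.tail) : ¬ EnfDeleted τ e a := by
  have hτe : τ e.1 < τ e.2 := hτ e (hp.2.2 e he)
  have hτa : τ a.1 < τ a.2 := hτ a (hp.2.2 a ha)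
  intro hdel
  have hstart : τ a.1 ≤ τ e.1 := hdel.elim (fun h => (congrArg τ h.1).le) fun h => h.1.le
  have hend : τ e.1 < τ a.2 := hdel.elim (fun h => (congrArg τ h.1).ge.trans_lt hτa) And.right
  have hpair := hp.pairwise_le fun b hb => (hτ b hb).le
  obtain rfl | hea | hae := eq_or_rel_or_rel_of_mem_zip_tail hpair he ha
  · exact hdel.elim (fun h => h.2 rfl) fun h => h.1.false
  · exact (hstart.trans_lt hτe).not_ge hea
  · exact hend.not_ge hae

end IsWalk

theorem walk_through_enforced_arc_survives_general {α : Type*} (A : Set (α × α)) (τ : α → ℕ)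
    (htopo : ∀ a ∈ A, τ a.1 < τ a.2) (u v s t : α)
    (p : List α) (hp : IsWalk A s t p) (hcon : (u, v) ∈ p.zip p.tail) :
    (∀ w : α, w ≠ v → (u, w) ∉ p.zip p.tail) ∧
    (∀ i j : α, τ i < τ u → τ u < τ j → (i, j) ∉ p.zip p.tail) ∧
    IsWalk (enforce A τ (u, v)) s t p := by
  have hkept : ∀ a ∈ p.zip p.tail, ¬ EnfDeleted τ (u, v) a :=
    fun _ => hp.not_enfDeleted htopo hcon
  obtain ⟨hhead, hlast, harc⟩ := hp
  exact ⟨fun w hw hmem => hkept (u, w) hmem (.inl ⟨rfl, hw⟩),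
    fun i j hi hj hmem => hkept (i, j) hmem (.inr ⟨hi, hj⟩),
    hhead, hlast, fun a ha => ⟨harc a ha, hkept a ha⟩⟩

/-- Walks through an enforced arc survive enforcement: every `s,t`-walk in `G` containing
the arc `(u, v)` uses no arc deleted by enforcing `(u, v)`, i.e. it contains no arc
`(u, w)` with `w ≠ v` and no arc `(i, j)` with `τ i < τ u < τ j`; hence it is an
`s,t`-walk in the subgraph obtained by enforcing `(u, v)`. -/
theorem walk_through_enforced_arc_survives (A : Set (V × V)) (τ : V → ℕ)
    (hinj : Function.Injective τ) (htopo : ∀ a ∈ A, τ a.1 < τ a.2)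
    (u v : V) (huv : (u, v) ∈ A) (s t : V)
    (p : List V) (hp : IsWalk A s t p) (hcon : (u, v) ∈ p.zip p.tail) :
    (∀ w : V, w ≠ v → (u, w) ∉ p.zip p.tail) ∧
    (∀ i j : V, τ i < τ u → τ u < τ j → (i, j) ∉ p.zip p.tail) ∧
    IsWalk (enforce A τ (u, v)) s t p :=
  walk_through_enforced_arc_survives_general A τ htopo u v s t p hp hcon
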